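/- arXiv:1311.1488 — 2 statements merged into one kernel-verified Lean document; each statement's English description precedes it below -/
import Mathlib

section
/- For every integer m ≥ 1, every n ≥ 0 and every x > 0, pointwise on the underlying probability space: if θ^{(m)}_{n+1} − θ^{(m)}_n > x, then there exist i ∈ {1,…,N} and j ∈ {0,1} such that Y_{n,2i+j} > x and 𝒴_i(n) > x + 𝒴_N(n−m) (with 𝒴_N(k) = 0 for k < 0). -/
open MeasureTheory ProbabilityTheory Real Filter Set

noncomputable section

/-- One step of the `N`-BRW: each of the `N` particles branches into two, the children jump
according to `jump`, and only the `N` right-most particles are kept; the result is the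
sorted (ascending) vector of the `N` retained positions. -/
def brwStep (N : ℕ) (pos : Fin N → ℝ) (jump : Fin N → Fin 2 → ℝ) : Fin N → ℝ := fun i =>
  (((Finset.univ : Finset (Fin N × Fin 2)).val.map fun p => pos p.1 + jump p.1 p.2).sort
      (· ≤ ·)).getD (N + i) 0

/-- The `N`-BRW started from the sorted configuration `x0`, driven by the jumps `jump`:
`brw N x0 jump n i` is the position `X_{i+1}(n)` of the `(i+1)`-th lowest particle at time `n`. -/
def brw (N : ℕ) (x0 : Fin N → ℝ) (jump : ℕ → Fin N → Fin 2 → ℝ) : ℕ → Fin N → ℝ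
  | 0 => x0
  | n + 1 => brwStep N (brw N x0 jump n) (jump n)

/-- Position `X_N(n)` of the right-most particle of the `N`-BRW started at the origin. -/
def brwMax (N : ℕ) (jump : ℕ → Fin N → Fin 2 → ℝ) (n : ℕ) : ℝ :=
  ⨆ i, brw N (fun _ => 0) jump n i

/-- Position `X_1(n)` of the left-most particle of the `N`-BRW started at the origin. -/
def brwMin (N : ℕ) (jump : ℕ → Fin N → Fin 2 → ℝ) (n : ℕ) : ℝ :=
  ⨅ i, brw N (fun _ => 0) jump n i

/-- The `(N,ℓ)`-discretised stairs process driven by the jumps `Y`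
(with the convention `R(k) = 0` for `k ≤ 0`, realised via truncated subtraction). -/
def dsp (N ℓ : ℕ) (Y : ℕ → Fin N → Fin 2 → ℝ) : ℕ → ℝ
  | 0 => 0
  | n + 1 => max (dsp N ℓ Y n) (dsp N ℓ Y (n - ℓ) + ⨆ p : Fin N × Fin 2, Y n p.1 p.2)

/-- The tail `P(X > x) = 1/h(x)` of the random variable `X` under `P`. -/
def tail {Ω : Type*} [MeasurableSpace Ω] (P : Measure Ω) (X : Ω → ℝ) (x : ℝ) : ℝ :=
  (P {ω | x < X ω}).toReal

/-- Generalized inverse `h⁻¹(y)` of `h(x) = 1 / P(X > x)`. -/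
def hinv {Ω : Type*} [MeasurableSpace Ω] (P : Measure Ω) (X : Ω → ℝ) (y : ℝ) : ℝ :=
  sInf {x : ℝ | 0 ≤ x ∧ tail P X x ≤ y⁻¹}

/-- The scaling sequence `c_N = h⁻¹(2 N log₂ N)`. -/
def cN {Ω : Type*} [MeasurableSpace Ω] (P : Measure Ω) (X : Ω → ℝ) (N : ℕ) : ℝ :=
  hinv P X (2 * N * Real.logb 2 N)

/-- `θ^{(m)}_n = max_{0 ≤ k ≤ n} (𝒴_N(k) − R^{N,m}(k))`. -/
def theta (N m : ℕ) (Y : ℕ → Fin N → Fin 2 → ℝ) (n : ℕ) : ℝ :=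
  (Finset.range (n + 1)).sup' Finset.nonempty_range_add_one fun k => brwMax N Y k - dsp N m Y k

/-!
Let `x < θ (n + 1) - θ n` with `0 ≤ x`. Then the maximum defining `θ (n + 1)` is attained at time
`n + 1`, so the right-most particle at that time, born of particle `i` by a jump `Y n i j`,
satisfies `θ n + x < brw n i + Y n i j - R (n + 1)`. The recursion for `R` bounds `R (n + 1)` below
in two ways: by `R n`, which together with `brw n i - R n ≤ θ n` gives `x < Y n i j`, and by
`R (n - m) + Y n i j`, which together with `brwMax (n - m) - R (n - m) ≤ θ n` gives
`x + brwMax (n - m) < brw n i`.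
-/

theorem exists_brwStep_eq_add {N : ℕ} (pos : Fin N → ℝ) (jump : Fin N → Fin 2 → ℝ) (i : Fin N) :
    ∃ k j, brwStep N pos jump i = pos k + jump k j := by
  let children : Multiset ℝ :=
    (Finset.univ : Finset (Fin N × Fin 2)).val.map fun p => pos p.1 + jump p.1 p.2
  have hlen : N + i < (children.sort (· ≤ ·)).length := by
    have hcard : children.card = N * 2 := by simp [children]
    rw [Multiset.length_sort, hcard]
    omega
  have hmem : brwStep N pos jump i ∈ children := by
    rw [← Multiset.mem_sort (r := (· ≤ ·)), brwStep, List.getD_eq_getElem _ _ hlen]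
    exact List.getElem_mem hlen
  obtain ⟨⟨k, j⟩, -, hkj⟩ := Multiset.mem_map.1 hmem
  exact ⟨k, j, hkj.symm⟩

section Path

variable {N : ℕ} (Y : ℕ → Fin N → Fin 2 → ℝ)

theorem brw_le_brwMax (n : ℕ) (i : Fin N) : brw N (fun _ => 0) Y n i ≤ brwMax N Y n :=
  le_ciSup (finite_range (brw N (fun _ => 0) Y n)).bddAbove i

theorem exists_brwMax_succ_eq_add [NeZero N] (n : ℕ) :
    ∃ i j, brwMax N Y (n + 1) = brw N (fun _ => 0) Y n i + Y n i j := by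
  obtain ⟨k, hk⟩ := exists_eq_ciSup_of_finite (f := brw N (fun _ => 0) Y (n + 1))
  obtain ⟨i, j, hij⟩ := exists_brwStep_eq_add (brw N (fun _ => 0) Y n) (Y n) k
  exact ⟨i, j, hk.symm.trans hij⟩

theorem dsp_le_dsp_succ (ℓ n : ℕ) : dsp N ℓ Y n ≤ dsp N ℓ Y (n + 1) := by
  rw [dsp]
  exact le_max_left _ _

theorem dsp_sub_add_le_dsp_succ (ℓ n : ℕ) (i : Fin N) (j : Fin 2) :
    dsp N ℓ Y (n - ℓ) + Y n i j ≤ dsp N ℓ Y (n + 1) := by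
  have hjump : Y n i j ≤ ⨆ p : Fin N × Fin 2, Y n p.1 p.2 :=
    le_ciSup (f := fun p : Fin N × Fin 2 => Y n p.1 p.2) (finite_range _).bddAbove (i, j)
  calc dsp N ℓ Y (n - ℓ) + Y n i j
      ≤ dsp N ℓ Y (n - ℓ) + ⨆ p : Fin N × Fin 2, Y n p.1 p.2 := by gcongr
    _ ≤ dsp N ℓ Y (n + 1) := by
      rw [dsp]
      exact le_max_right _ _

theorem brwMax_sub_dsp_le_theta (m : ℕ) {k n : ℕ} (hkn : k ≤ n) :
    brwMax N Y k - dsp N m Y k ≤ theta N m Y n :=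
  Finset.le_sup' (fun k => brwMax N Y k - dsp N m Y k) (Finset.mem_range_succ_iff.2 hkn)

theorem theta_succ (m n : ℕ) :
    theta N m Y (n + 1) =
      max (brwMax N Y (n + 1) - dsp N m Y (n + 1)) (theta N m Y n) := by
  simp only [theta, Finset.range_add_one (n := n + 1)]
  exact Finset.sup'_insert _ _

theorem stmt_5_general [NeZero N] (m n : ℕ) {x : ℝ} (hx : 0 ≤ x)
    (hθ : x < theta N m Y (n + 1) - theta N m Y n) :
    ∃ i j, x < Y n i j ∧ x + brwMax N Y (n - m) < brw N (fun _ => 0) Y n i := by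
  have hnew : theta N m Y n + x < brwMax N Y (n + 1) - dsp N m Y (n + 1) := by
    rw [theta_succ, lt_sub_iff_add_lt', lt_max_iff] at hθ
    exact hθ.resolve_right (by linarith)
  obtain ⟨i, j, hmax⟩ := exists_brwMax_succ_eq_add Y n
  refine ⟨i, j, ?_, ?_⟩
  · linarith [brw_le_brwMax Y n i, dsp_le_dsp_succ Y m n,
      brwMax_sub_dsp_le_theta Y m (le_refl n)]
  · linarith [dsp_sub_add_le_dsp_succ Y m n i j,
      brwMax_sub_dsp_le_theta Y m (Nat.sub_le n m)]

end Path

/-- pointwise on the underlying probability space, for `m ≥ 1`, `n ≥ 0` and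
`x > 0`: if `θ^{(m)}_{n+1} − θ^{(m)}_n > x`, then some particle `i` has jump `Y_{n,2i+j} > x`
for some `j ∈ {0,1}` and position `𝒴_i(n) > x + 𝒴_N(n−m)` (with `𝒴_N(k) = 0` for `k < 0`). -/
theorem stmt_5 {Ω : Type*} [MeasurableSpace Ω] (P : Measure Ω) [IsProbabilityMeasure P]
    (X : Ω → ℝ) (hXmeas : Measurable X) (hXpos : ∀ ω, 0 ≤ X ω)
    (α : ℝ) (hα : 0 < α)
    (hRV : ∀ l : ℝ, 0 < l →
      Tendsto (fun x => tail P X x / tail P X (l * x)) atTop (nhds (l ^ α)))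
    (N : ℕ) (hN : 1 ≤ N)
    (ξ : ℕ → Fin N → Fin 2 → Ω → ℝ)
    (hξmeas : ∀ n i j, Measurable (ξ n i j))
    (hξpos : ∀ n i j ω, 0 ≤ ξ n i j ω)
    (hξdist : ∀ n i j, Measure.map (ξ n i j) P = Measure.map X P)
    (hξindep : iIndepFun
      (fun p : ℕ × Fin N × Fin 2 => ξ p.1 p.2.1 p.2.2) P)
    (m : ℕ) (hm : 1 ≤ m) (n : ℕ) (x : ℝ) (hx : 0 < x) (ω : Ω)
    (hθ : x < theta N m (fun k i j => ξ k i j ω / cN P X N) (n + 1) -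
        theta N m (fun k i j => ξ k i j ω / cN P X N) n) :
    ∃ (i : Fin N) (j : Fin 2),
      x < ξ n i j ω / cN P X N ∧
      x + brwMax N (fun k i j => ξ k i j ω / cN P X N) (n - m) <
        brw N (fun _ => 0) (fun k i j => ξ k i j ω / cN P X N) n i := by
  have : NeZero N := .of_pos hN
  exact stmt_5_general (fun k i j => ξ k i j ω / cN P X N) m n hx.le hθ

end
end

section
/- For every integer m ≥ 0 and every real x, the expected number of particles of the N-BRW above x at time m satisfies E[ #{ i ∈ {1,…,N} : X_i(m) > x } ] ≤ N · 2^m · P(S_m > x). -/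
open MeasureTheory ProbabilityTheory Real Filter Set

noncomputable section

/-!
Selection only discards particles, so the `N`-BRW at time `n + 1` is a sub-configuration of the
`2N` children of its particles at time `n`. A child is displaced from its parent by a jump that is
independent of the past, so passing to the children turns the intensity measure `μ` of the system
into `2 • μ ∗ ν`, where `ν` is the law of a jump. A random walk with jumps of law `ν` evolves by the
same convolution without the factor `2`; since convolution is monotone, induction bounds the
intensity measure at time `m` by `2 ^ m` times that of a family of random walks with the same
starting points.
-/

lemma lt_getElem_iff_countP_le {α : Type*} [LinearOrder α] {l : List α} (hl : l.SortedLE) {k : ℕ}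
    (hk : k < l.length) (x : α) : x < l[k] ↔ l.countP (· ≤ x) ≤ k := by
  constructor
  · intro hx
    have hdrop : (l.drop k).countP (· ≤ x) = 0 := by
      rw [List.countP_eq_zero]
      intro y hy
      obtain ⟨j, hj, rfl⟩ := List.getElem_of_mem hy
      simpa using hx.trans_le (hl.getElem_le_getElem_of_le (Nat.le_add_right k j))
    calc l.countP (· ≤ x) = (l.take k ++ l.drop k).countP (· ≤ x) := by
          rw [List.take_append_drop]
      _ = (l.take k).countP (· ≤ x) := by rw [List.countP_append, hdrop, add_zero]
      _ ≤ k := List.countP_le_length.trans (List.length_take_le k l)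
  · contrapose!
    intro hx
    have htake : (l.take (k + 1)).countP (· ≤ x) = k + 1 := by
      rw [List.countP_eq_length.2, List.length_take_of_le hk]
      intro y hy
      obtain ⟨j, hj, rfl⟩ := List.getElem_of_mem hy
      rw [List.length_take_of_le hk] at hj
      simpa using (hl.getElem_le_getElem_of_le (Nat.le_of_lt_succ hj)).trans hx
    calc k < (l.take (k + 1)).countP (· ≤ x) := by omega
      _ ≤ l.countP (· ≤ x) := (List.take_sublist (k + 1) l).countP_le

lemma iIndepFun_curry {Ω ι κ E : Type*} [MeasurableSpace Ω] [MeasurableSpace E]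
    {P : Measure Ω} {X : ι → κ → Ω → E} (hX : ∀ i k, Measurable (X i k))
    (hindep : iIndepFun (fun p : ι × κ => X p.1 p.2) P) :
    iIndepFun (fun i ω k => X i k ω) P := by
  have := hindep.isProbabilityMeasure
  have (i : ι) (k : κ) : IsProbabilityMeasure (P.map (X i k)) :=
    Measure.isProbabilityMeasure_map (hX i k).aemeasurable
  have hrow (i : ι) : P.map (fun ω k => X i k ω) = Measure.infinitePi fun k => P.map (X i k) :=
    (iIndepFun_iff_map_fun_eq_infinitePi_map (hX i)).1
      (hindep.precomp (g := Prod.mk i) (Prod.mk_right_injective i))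
  rw [iIndepFun_iff_map_fun_eq_infinitePi_map (fun i => measurable_pi_iff.2 (hX i))]
  simp only [hrow]
  rw [← Measure.infinitePi_map_curry fun i k => P.map (X i k),
    ← (iIndepFun_iff_map_fun_eq_infinitePi_map fun p : ι × κ => hX p.1 p.2).1 hindep,
    Measure.map_map (by fun_prop) (by fun_prop)]
  rfl

lemma natCast_card_filter_mem {Ω ι E R : Type*} [Fintype ι] [AddCommMonoidWithOne R] (Y : ι → Ω → E)
    (B : Set E) [DecidablePred (· ∈ B)] (ω : Ω) :
    ((Finset.univ.filter fun i => Y i ω ∈ B).card : R) =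
      ∑ i, (Y i ⁻¹' B).indicator (fun _ => 1) ω := by
  classical
  simp only [Finset.natCast_card_filter, indicator_apply, mem_preimage]

section Intensity

variable {Ω ι κ E : Type*} [MeasurableSpace Ω] [Fintype ι] [Fintype κ] [MeasurableSpace E]
  {P : Measure Ω}

/-- The intensity measure of the random point configuration `(Y i)` in `E`: the mass of a set is
the expected number of points of the configuration in it. -/
def intensity (P : Measure Ω) (Y : ι → Ω → E) : Measure E :=
  ∑ i, P.map (Y i)

lemma intensity_apply {Y : ι → Ω → E} (hY : ∀ i, Measurable (Y i)) {B : Set E}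
    (hB : MeasurableSet B) : intensity P Y B = ∑ i, P (Y i ⁻¹' B) := by
  simp only [intensity, Measure.coe_finsetSum, Finset.sum_apply, Measure.map_apply (hY _) hB]

lemma lintegral_card_filter_mem {Y : ι → Ω → E} (hY : ∀ i, Measurable (Y i)) {B : Set E}
    [DecidablePred (· ∈ B)] (hB : MeasurableSet B) :
    ∫⁻ ω, ((Finset.univ.filter fun i => Y i ω ∈ B).card : ENNReal) ∂P = intensity P Y B := by
  simp_rw [natCast_card_filter_mem, intensity_apply hY hB]
  rw [lintegral_finsetSum _ fun i _ => measurable_const.indicator (hY i hB)]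
  simp only [lintegral_indicator_const (hY _ hB), one_mul]

lemma integral_card_filter_mem [IsFiniteMeasure P] {Y : ι → Ω → E} (hY : ∀ i, Measurable (Y i))
    {B : Set E} [DecidablePred (· ∈ B)] (hB : MeasurableSet B) :
    ∫ ω, ((Finset.univ.filter fun i => Y i ω ∈ B).card : ℝ) ∂P = (intensity P Y).real B := by
  have hmeas : Measurable fun ω =>
      ((Finset.univ.filter fun i => Y i ω ∈ B).card : ENNReal) := by
    simp_rw [natCast_card_filter_mem]
    exact Finset.measurable_fun_sum _ fun i _ => measurable_const.indicator (hY i hB)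
  rw [measureReal_def, ← lintegral_card_filter_mem hY hB, ← integral_toReal hmeas.aemeasurable
    (Eventually.of_forall fun ω => ENNReal.natCast_lt_top _)]
  simp only [ENNReal.toReal_natCast]

lemma intensity_le_of_map_le {Y : ι → Ω → E} {Z : κ → Ω → E} (hY : ∀ i, Measurable (Y i))
    (hZ : ∀ k, Measurable (Z k))
    (hYZ : ∀ ω, Finset.univ.val.map (fun i => Y i ω) ≤ Finset.univ.val.map fun k => Z k ω) :
    intensity P Y ≤ intensity P Z := by
  classical
  refine Measure.le_iff.2 fun B hB => ?_
  rw [← lintegral_card_filter_mem hY hB, ← lintegral_card_filter_mem hZ hB]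
  gcongr with ω
  simpa only [Multiset.countP_map, Finset.card_def, Finset.filter_val] using
    Multiset.countP_le_of_le (· ∈ B) (hYZ ω)

lemma intensity_comp_fst (Y : ι → Ω → E) :
    intensity P (fun p : ι × κ => Y p.1) = (Fintype.card κ : ENNReal) • intensity P Y := by
  simp only [intensity, Fintype.sum_prod_type, Finset.sum_const, Finset.card_univ,
    ← Finset.sum_nsmul, Nat.cast_smul_eq_nsmul]

lemma conv_mono_left [AddMonoid E] [MeasurableAdd₂ E] {μ μ' : Measure E} (h : μ ≤ μ')
    (ν : Measure E) [SFinite ν] : μ ∗ ν ≤ μ' ∗ ν :=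
  Measure.map_mono (Measure.prod_mono h le_rfl) measurable_add

lemma sum_conv [AddMonoid E] [MeasurableAdd₂ E] (μ : ι → Measure E) (ν : Measure E)
    [SFinite ν] : (∑ i, μ i) ∗ ν = ∑ i, μ i ∗ ν := by
  simp only [Measure.conv, ← Measure.sum_fintype, Measure.prod_sum_left,
    Measure.map_sum measurable_add.aemeasurable]

lemma intensity_add [AddMonoid E] [MeasurableAdd₂ E] [IsFiniteMeasure P] {Y Z : ι → Ω → E}
    {ν : Measure E} [SFinite ν] (hY : ∀ i, Measurable (Y i)) (hZ : ∀ i, Measurable (Z i))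
    (hindep : ∀ i, IndepFun (Y i) (Z i) P) (hν : ∀ i, P.map (Z i) = ν) :
    intensity P (fun i => Y i + Z i) = intensity P Y ∗ ν := by
  simp only [intensity, sum_conv, (hindep _).map_add_eq_map_conv_map (hY _) (hZ _), hν]

lemma intensity_walk_succ [AddCommMonoid E] [MeasurableAdd₂ E] (x0 : ι → E) {η : ℕ → Ω → E}
    (hη : ∀ k, Measurable (η k)) (hindep : iIndepFun η P) (n : ℕ) :
    intensity P (fun i ω => x0 i + ∑ k ∈ Finset.range (n + 1), η k ω) =
      intensity P (fun i ω => x0 i + ∑ k ∈ Finset.range n, η k ω) ∗ P.map (η n) := by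
  have := hindep.isProbabilityMeasure
  have hwalk : Measurable fun ω => ∑ k ∈ Finset.range n, η k ω := by fun_prop
  have hindep_walk : IndepFun (fun ω => ∑ k ∈ Finset.range n, η k ω) (η n) P := by
    simpa only [Finset.sum_fn] using hindep.indepFun_sum_range_succ hη n
  simp only [Finset.sum_range_succ, ← add_assoc]
  exact intensity_add (fun i => hwalk.const_add (x0 i)) (fun _ => hη n)
    (fun i => hindep_walk.comp (measurable_const_add (x0 i)) measurable_id) fun _ => rfl

end Intensity

section BranchingRandomWalk

variable {Ω : Type*} [MeasurableSpace Ω] {P : Measure Ω} {N : ℕ}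

/-- Positions of the `2N` children, before selection, of particles at `pos` whose children jump
according to `jump`. -/
def offspring (pos : Fin N → ℝ) (jump : Fin N → Fin 2 → ℝ) (p : Fin N × Fin 2) : ℝ :=
  pos p.1 + jump p.1 p.2

lemma map_brwStep_le (pos : Fin N → ℝ) (jump : Fin N → Fin 2 → ℝ) :
    Finset.univ.val.map (brwStep N pos jump) ≤ Finset.univ.val.map (offspring pos jump) := by
  set sorted := (Finset.univ.val.map (offspring pos jump)).sort (· ≤ ·) with hsorted
  have hlength : sorted.length = N + N := by simp [hsorted, mul_two]
  have hdrop : List.ofFn (brwStep N pos jump) = sorted.drop N := by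
    refine List.ext_getElem (by simp [hlength]) fun i hi _ => ?_
    rw [List.length_ofFn] at hi
    rw [List.getElem_ofFn, List.getElem_drop]
    exact List.getD_eq_getElem sorted 0 (by omega)
  rw [Fin.univ_val_map, hdrop,
    ← Multiset.sort_eq (Finset.univ.val.map (offspring pos jump)) (· ≤ ·)]
  exact (List.drop_sublist N sorted).subperm

lemma lt_brwStep_iff (pos : Fin N → ℝ) (jump : Fin N → Fin 2 → ℝ) (i : Fin N) (x : ℝ) :
    x < brwStep N pos jump i ↔
      (Finset.univ.filter fun p => offspring pos jump p ≤ x).card ≤ N + i := by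
  set sorted := (Finset.univ.val.map (offspring pos jump)).sort (· ≤ ·) with hsorted
  have hlength : sorted.length = N + N := by simp [hsorted, mul_two]
  have hi : N + i < sorted.length := by omega
  have hcount : sorted.countP (· ≤ x) =
      (Finset.univ.filter fun p => offspring pos jump p ≤ x).card := by
    rw [← Multiset.coe_countP, Multiset.sort_eq, Multiset.countP_map, Finset.card_def,
      Finset.filter_val]
  rw [← hcount, ← lt_getElem_iff_countP_le (Multiset.pairwise_sort _ _).sortedLE hi,
    ← List.getD_eq_getElem sorted 0 hi]
  rfl

lemma measurable_brwStep (N : ℕ) :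
    Measurable fun q : (Fin N → ℝ) × (Fin N → Fin 2 → ℝ) => brwStep N q.1 q.2 := by
  refine measurable_pi_iff.2 fun i => measurable_of_Ioi fun x => ?_
  have hoffspring (p : Fin N × Fin 2) : Measurable
      fun q : (Fin N → ℝ) × (Fin N → Fin 2 → ℝ) => offspring q.1 q.2 p := by
    unfold offspring
    fun_prop
  simp only [preimage, mem_Ioi, lt_brwStep_iff, Finset.card_filter]
  refine measurableSet_le (Finset.measurable_fun_sum _ fun p _ => ?_) measurable_const
  exact Measurable.ite (measurableSet_le (hoffspring p) measurable_const)
    measurable_const measurable_const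

lemma measurable_brw (x0 : Fin N → ℝ) {ξ : ℕ → Ω → Fin N → Fin 2 → ℝ} {n : ℕ}
    (hξ : ∀ k < n, Measurable (ξ k)) : Measurable fun ω => brw N x0 (fun k => ξ k ω) n := by
  induction n with
  | zero => exact measurable_const
  | succ n ih =>
    exact (measurable_brwStep N).comp
      ((ih fun k hk => hξ k (hk.trans n.lt_succ_self)).prodMk (hξ n n.lt_succ_self))

lemma indepFun_brw (x0 : Fin N → ℝ) {ξ : ℕ → Ω → Fin N → Fin 2 → ℝ}
    (hξ : ∀ k, Measurable (ξ k)) (hindep : iIndepFun ξ P) (n : ℕ) :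
    IndepFun (fun ω => brw N x0 (fun k => ξ k ω) n) (ξ n) P := by
  have hpast_present := indep_iSup_of_disjoint (fun k => (hξ k).comap_le) hindep.iIndep
    (show Disjoint (Iio n) {n} by simp)
  have hpast : Measurable[⨆ k ∈ Iio n, MeasurableSpace.comap (ξ k) inferInstance]
      fun ω => brw N x0 (fun k => ξ k ω) n :=
    @measurable_brw Ω (_) N x0 ξ n fun k hk =>
      (comap_measurable (ξ k)).mono (le_iSup₂_of_le k hk le_rfl) le_rfl
  refine indep_of_indep_of_le_right (indep_of_indep_of_le_left hpast_present hpast.comap_le) ?_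
  exact le_iSup₂_of_le n rfl le_rfl

lemma intensity_brw_succ_le (x0 : Fin N → ℝ) {ξ : ℕ → Ω → Fin N → Fin 2 → ℝ}
    (hξ : ∀ k, Measurable (ξ k)) (hindep : iIndepFun ξ P) (n : ℕ)
    {ν : Measure ℝ} [SFinite ν] (hν : ∀ a b, P.map (fun ω => ξ n ω a b) = ν) :
    intensity P (fun i ω => brw N x0 (fun k => ξ k ω) (n + 1) i) ≤
      ((2 : ENNReal) • intensity P (fun i ω => brw N x0 (fun k => ξ k ω) n i)) ∗ ν := by
  have := hindep.isProbabilityMeasure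
  have hbrw (k : ℕ) : ∀ i, Measurable fun ω => brw N x0 (fun k => ξ k ω) k i :=
    measurable_pi_iff.1 (measurable_brw x0 fun k _ => hξ k)
  have hjump (p : Fin N × Fin 2) : Measurable fun ω => ξ n ω p.1 p.2 := by fun_prop
  calc intensity P (fun i ω => brw N x0 (fun k => ξ k ω) (n + 1) i)
      ≤ intensity P (fun p ω => offspring (brw N x0 (fun k => ξ k ω) n) (ξ n ω) p) :=
        intensity_le_of_map_le (hbrw (n + 1)) (fun p => (hbrw n p.1).add (hjump p))
          fun ω => map_brwStep_le _ _
    _ = intensity P (fun (p : Fin N × Fin 2) ω => brw N x0 (fun k => ξ k ω) n p.1) ∗ ν :=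
        intensity_add (fun p => hbrw n p.1) hjump (fun p =>
          (indepFun_brw x0 hξ hindep n).comp (measurable_pi_apply p.1)
            ((measurable_pi_apply p.2).comp (measurable_pi_apply p.1))) fun p => hν p.1 p.2
    _ = ((2 : ENNReal) • intensity P (fun i ω => brw N x0 (fun k => ξ k ω) n i)) ∗ ν := by
        rw [intensity_comp_fst fun i ω => brw N x0 (fun k => ξ k ω) n i, Fintype.card_fin,
          Nat.cast_ofNat]

lemma intensity_brw_le {Ω' : Type*} [MeasurableSpace Ω'] {P' : Measure Ω'} (x0 : Fin N → ℝ)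
    {ξ : ℕ → Ω → Fin N → Fin 2 → ℝ} (hξ : ∀ k, Measurable (ξ k)) (hξindep : iIndepFun ξ P)
    {η : ℕ → Ω' → ℝ} (hη : ∀ k, Measurable (η k)) (hηindep : iIndepFun η P')
    (hlaw : ∀ k a b, P.map (fun ω => ξ k ω a b) = P'.map (η k)) (m : ℕ) :
    intensity P (fun i ω => brw N x0 (fun k => ξ k ω) m i) ≤
      (2 : ENNReal) ^ m • intensity P' (fun i ω' => x0 i + ∑ k ∈ Finset.range m, η k ω') := by
  have := hξindep.isProbabilityMeasure
  have := hηindep.isProbabilityMeasure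
  induction m with
  | zero => simp [intensity, brw]
  | succ m ih =>
    calc intensity P (fun i ω => brw N x0 (fun k => ξ k ω) (m + 1) i)
        ≤ ((2 : ENNReal) • intensity P (fun i ω => brw N x0 (fun k => ξ k ω) m i)) ∗
            P'.map (η m) := intensity_brw_succ_le x0 hξ hξindep m (hlaw m)
      _ ≤ ((2 : ENNReal) • (2 : ENNReal) ^ m •
            intensity P' (fun i ω' => x0 i + ∑ k ∈ Finset.range m, η k ω')) ∗ P'.map (η m) :=
          conv_mono_left (by gcongr) _
      _ = (2 : ENNReal) ^ (m + 1) •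
            intensity P' (fun i ω' => x0 i + ∑ k ∈ Finset.range (m + 1), η k ω') := by
          rw [smul_smul, ← pow_succ', Measure.conv_smul_left, intensity_walk_succ x0 hη hηindep]

end BranchingRandomWalk

theorem stmt_6_general {Ω Ω' : Type*} [MeasurableSpace Ω] [MeasurableSpace Ω'] (P : Measure Ω)
    (P' : Measure Ω') {N : ℕ} (x0 : Fin N → ℝ)
    {ξ : ℕ → Ω → Fin N → Fin 2 → ℝ} (hξ : ∀ k, Measurable (ξ k)) (hξindep : iIndepFun ξ P)
    {η : ℕ → Ω' → ℝ} (hη : ∀ k, Measurable (η k)) (hηindep : iIndepFun η P')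
    (hlaw : ∀ k a b, P.map (fun ω => ξ k ω a b) = P'.map (η k)) (m : ℕ)
    {B : Set ℝ} [DecidablePred (· ∈ B)] (hB : MeasurableSet B) :
    ∫ ω, ((Finset.univ.filter fun i => brw N x0 (fun k => ξ k ω) m i ∈ B).card : ℝ) ∂P ≤
      2 ^ m * ∑ i, P'.real {ω' | x0 i + ∑ k ∈ Finset.range m, η k ω' ∈ B} := by
  have := hξindep.isProbabilityMeasure
  have := hηindep.isProbabilityMeasure
  have hbrw : ∀ i, Measurable fun ω => brw N x0 (fun k => ξ k ω) m i :=
    measurable_pi_iff.1 (measurable_brw x0 fun k _ => hξ k)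
  have hwalk (i : Fin N) : Measurable fun ω' => x0 i + ∑ k ∈ Finset.range m, η k ω' := by fun_prop
  have hle := intensity_brw_le x0 hξ hξindep hη hηindep hlaw m B
  rw [Measure.smul_apply, smul_eq_mul, intensity_apply hwalk hB] at hle
  have hfinite : (2 : ENNReal) ^ m *
      ∑ i, P' ((fun ω' => x0 i + ∑ k ∈ Finset.range m, η k ω') ⁻¹' B) ≠ ⊤ :=
    ENNReal.mul_ne_top (by finiteness) (ENNReal.sum_ne_top.2 fun i _ => measure_ne_top P' _)
  rw [integral_card_filter_mem hbrw hB]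
  refine (ENNReal.toReal_mono hfinite hle).trans_eq ?_
  rw [ENNReal.toReal_mul, ENNReal.toReal_sum fun i _ => measure_ne_top _ _,
    ENNReal.toReal_pow, ENNReal.toReal_ofNat]
  rfl

/-- the expected number of particles of the `N`-BRW above `x` at time `m` is at
most `N 2^m P(S_m > x)`, where `(S_m)` is a random walk with i.i.d. increments distributed as
`X` (realised on an auxiliary probability space `(Ω', P')`). -/
theorem stmt_6 {Ω : Type*} [MeasurableSpace Ω] (P : Measure Ω) [IsProbabilityMeasure P]
    (X : Ω → ℝ) (hXmeas : Measurable X) (hXpos : ∀ ω, 0 ≤ X ω)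
    (N : ℕ) (hN : 1 ≤ N)
    (ξ : ℕ → Fin N → Fin 2 → Ω → ℝ)
    (hξmeas : ∀ n i j, Measurable (ξ n i j))
    (hξpos : ∀ n i j ω, 0 ≤ ξ n i j ω)
    (hξdist : ∀ n i j, Measure.map (ξ n i j) P = Measure.map X P)
    (hξindep : iIndepFun
      (fun p : ℕ × Fin N × Fin 2 => ξ p.1 p.2.1 p.2.2) P)
    {Ω' : Type*} [MeasurableSpace Ω'] (P' : Measure Ω') [IsProbabilityMeasure P']
    (η : ℕ → Ω' → ℝ)
    (hηmeas : ∀ k, Measurable (η k))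
    (hηdist : ∀ k, Measure.map (η k) P' = Measure.map X P)
    (hηindep : iIndepFun η P')
    (m : ℕ) (x : ℝ) :
    (∫ ω, ((Finset.univ.filter fun i : Fin N =>
        x < brw N (fun _ => 0) (fun k a b => ξ k a b ω) m i).card : ℝ) ∂P) ≤
      (N : ℝ) * 2 ^ m * (P' {ω' | x < ∑ k ∈ Finset.range m, η k ω'}).toReal := by
  have hrows : iIndepFun (fun k ω a b => ξ k a b ω) P :=
    (iIndepFun_curry (X := fun k (p : Fin N × Fin 2) => ξ k p.1 p.2)
      (fun k p => hξmeas k p.1 p.2) hξindep).comp (fun _ f a b => f (a, b)) (by fun_prop)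
  simpa [measureReal_def, mul_left_comm, mul_assoc] using
    stmt_6_general P P' (fun _ : Fin N => 0) (by fun_prop) hrows hηmeas hηindep
      (fun k a b => (hξdist k a b).trans (hηdist k).symm) m (measurableSet_Ioi (a := x))

end
end
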